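/- arXiv:2205.06030 — 2 statements merged into one kernel-verified Lean document; each statement's English description precedes it below -/
import Mathlib

section
/- (Order–degree–height surface for common left multiples, shift case.) For ℓ = 1, …, n let L_ℓ = Σ_{i=0}^{r_ℓ} (a_{ℓ,i}·)∘S_x^i with a_{ℓ,i} ∈ C[x,y] not all zero, deg_x a_{ℓ,i} ≤ d_ℓ and deg_y a_{ℓ,i} ≤ h_ℓ for all i. Let r, d, h ∈ ℕ be such that r ≥ r_ℓ, d ≥ d_ℓ, h ≥ h_ℓ for all ℓ and (r+1)(d+1)(h+1) − (r+1)(d+1)·Σ_ℓ h_ℓ − (r+1)(h+1)·Σ_ℓ d_ℓ − (d+1)(h+1)·Σ_ℓ r_ℓ + (r+1)·Σ_ℓ d_ℓ h_ℓ + (d+1)·Σ_ℓ r_ℓ h_ℓ + (h+1)·Σ_ℓ r_ℓ d_ℓ − Σ_ℓ r_ℓ d_ℓ h_ℓ > 0. Then there exist c_0, …, c_r ∈ C[x,y], not all zero, with deg_x c_i ≤ d and deg_y c_i ≤ h, and for each ℓ polynomials m_{ℓ,0}, …, m_{ℓ,r−r_ℓ} ∈ C[x,y] with deg_x m_{ℓ,j}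 ≤ d − d_ℓ and deg_y m_{ℓ,j} ≤ h − h_ℓ, such that for every ℓ the identity Σ_{i=0}^{r} (c_i·)∘S_x^i = (Σ_{j=0}^{r−r_ℓ} (m_{ℓ,j}·)∘S_x^j) ∘ L_ℓ holds as C-linear endomorphisms of C[x,y]; in particular L_1, …, L_n have a nonzero common left multiple of order at most r, degree at most d, and height at most h. -/
open MvPolynomial

/-- The shift `S_x` on `C[x,y]`: the `C`-algebra endomorphism (in fact automorphism)
with `x ↦ x + 1` and `y ↦ y`. -/
noncomputable def shiftX (C : Type*) [CommRing C] :
    MvPolynomial (Fin 2) C →ₐ[C] MvPolynomial (Fin 2) C :=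
  aeval ![X 0 + 1, X 1]

section Dimension

variable {K M : Type*} [Field K] [AddCommGroup M] [Module K M]

/-- Finitely many subspaces of `V` whose codimensions add up to less than `dim V` have a common
nonzero vector. -/
theorem exists_ne_zero_forall_mem_of_sum_codim_lt {ι : Type*} [Fintype ι]
    (V : Submodule K M) [FiniteDimensional K V] (U : ι → Submodule K M) (hU : ∀ ℓ, U ℓ ≤ V)
    (hlt : ∑ ℓ, ((Module.finrank K V : ℤ) - Module.finrank K (U ℓ)) < Module.finrank K V) :
    ∃ v ∈ V, v ≠ 0 ∧ ∀ ℓ, v ∈ U ℓ := by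
  let f : V →ₗ[K] (∀ ℓ, V ⧸ (U ℓ).submoduleOf V) :=
    LinearMap.pi fun ℓ => ((U ℓ).submoduleOf V).mkQ
  have hcodim (ℓ : ι) : (Module.finrank K (V ⧸ (U ℓ).submoduleOf V) : ℤ) =
      Module.finrank K V - Module.finrank K (U ℓ) := by
    have h₁ := Submodule.finrank_quotient_add_finrank ((U ℓ).submoduleOf V)
    have h₂ := (Submodule.submoduleOfEquivOfLe (hU ℓ)).finrank_eq
    lia
  have hker : LinearMap.ker f ≠ ⊥ := by
    refine f.ker_ne_bot_of_finrank_lt ?_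
    rw [Module.finrank_pi_fintype]
    zify
    simpa only [hcodim] using hlt
  obtain ⟨v, hv, hv0⟩ := (Submodule.ne_bot_iff _).1 hker
  refine ⟨v, v.2, by simpa using hv0, fun ℓ => ?_⟩
  have hvℓ : ((U ℓ).submoduleOf V).mkQ v = 0 := congrFun (LinearMap.mem_ker.1 hv) ℓ
  rwa [Submodule.mkQ_apply, Submodule.Quotient.mk_eq_zero] at hvℓ

end Dimension

section BoundedDegree

variable (C : Type*) [Field C]

/-- The polynomials in `C[x,y]` of degree at most `d` in `x` and at most `h` in `y`. -/
noncomputable def bidegreeLE (d h : ℕ) : Submodule C (MvPolynomial (Fin 2) C) :=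
  restrictSupport C {m | m 0 ≤ d ∧ m 1 ≤ h}

variable {C} in
theorem mem_bidegreeLE {d h : ℕ} {f : MvPolynomial (Fin 2) C} :
    f ∈ bidegreeLE C d h ↔ degreeOf 0 f ≤ d ∧ degreeOf 1 f ≤ h := by
  simp only [bidegreeLE, mem_restrictSupport_iff, degreeOf_le_iff, Set.subset_def,
    Finset.mem_coe, Set.mem_ofPred_eq]
  exact forall₂_and

variable {C} in
theorem mul_mem_bidegreeLE {d h d' h' : ℕ} {f g : MvPolynomial (Fin 2) C}
    (hf : f ∈ bidegreeLE C d h) (hg : g ∈ bidegreeLE C d' h') :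
    f * g ∈ bidegreeLE C (d + d') (h + h') := by
  rw [mem_bidegreeLE] at *
  exact ⟨(degreeOf_mul_le _ _ _).trans (add_le_add hf.1 hg.1),
    (degreeOf_mul_le _ _ _).trans (add_le_add hf.2 hg.2)⟩

/-- The exponents of bidegree at most `(d, h)` are indexed by `Fin (d + 1) × Fin (h + 1)`. -/
noncomputable def bidegreeExponentEquiv (d h : ℕ) :
    {m : Fin 2 →₀ ℕ | m 0 ≤ d ∧ m 1 ≤ h} ≃ Fin (d + 1) × Fin (h + 1) where
  toFun m := (⟨m.1 0, Nat.lt_succ_of_le m.2.1⟩, ⟨m.1 1, Nat.lt_succ_of_le m.2.2⟩)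
  invFun p := ⟨Finsupp.equivFunOnFinite.symm ![p.1, p.2],
    by simpa using ⟨Nat.le_of_lt_succ p.1.2, Nat.le_of_lt_succ p.2.2⟩⟩
  left_inv m := by
    ext i
    fin_cases i <;> simp
  right_inv p := by simp

/-- The basis of monomials of `bidegreeLE C d h`. -/
noncomputable def bidegreeLEBasis (d h : ℕ) :
    Module.Basis (Fin (d + 1) × Fin (h + 1)) C (bidegreeLE C d h) :=
  (basisRestrictSupport C _).reindex (bidegreeExponentEquiv d h)

instance (d h : ℕ) : FiniteDimensional C (bidegreeLE C d h) :=
  (bidegreeLEBasis C d h).finiteDimensional_of_finite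

theorem finrank_bidegreeLE (d h : ℕ) :
    Module.finrank C (bidegreeLE C d h) = (d + 1) * (h + 1) := by
  simp [Module.finrank_eq_card_basis (bidegreeLEBasis C d h)]

/-- The coefficient sequences of shift operators of order at most `r`, degree at most `d` and
height at most `h`. -/
def boundedCoeffs (r d h : ℕ) : Submodule C (ℕ → MvPolynomial (Fin 2) C) where
  carrier := {c | (∀ i, c i ∈ bidegreeLE C d h) ∧ ∀ i, r < i → c i = 0}
  add_mem' ha hb := ⟨fun i => add_mem (ha.1 i) (hb.1 i),
    fun i hi => by simp [ha.2 i hi, hb.2 i hi]⟩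
  zero_mem' := ⟨fun _ => zero_mem _, fun _ _ => rfl⟩
  smul_mem' t _ ha := ⟨fun i => Submodule.smul_mem _ t (ha.1 i),
    fun i hi => by simp [ha.2 i hi]⟩

/-- A bounded coefficient sequence is determined by its first `r + 1` entries. -/
noncomputable def boundedCoeffsEquiv (r d h : ℕ) :
    boundedCoeffs C r d h ≃ₗ[C] (Fin (r + 1) → bidegreeLE C d h) where
  toFun c i := ⟨c.1 i, c.2.1 i⟩
  map_add' _ _ := rfl
  map_smul' _ _ := rfl
  invFun v := ⟨fun i => if hi : i < r + 1 then (v ⟨i, hi⟩).1 else 0, fun i => by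
      by_cases hi : i < r + 1 <;> simp [hi], fun i hi => by simp [hi]⟩
  left_inv c := by
    ext1
    funext i
    by_cases hi : i < r + 1
    · simp [hi]
    · simp [hi, c.2.2 i (by lia)]
  right_inv v := by
    funext i
    ext1
    exact dif_pos i.2

instance (r d h : ℕ) : FiniteDimensional C (boundedCoeffs C r d h) :=
  (boundedCoeffsEquiv C r d h).symm.finiteDimensional

theorem finrank_boundedCoeffs (r d h : ℕ) :
    Module.finrank C (boundedCoeffs C r d h) = (r + 1) * ((d + 1) * (h + 1)) := by
  rw [(boundedCoeffsEquiv C r d h).finrank_eq, Module.finrank_pi_fintype]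
  simp [finrank_bidegreeLE]

end BoundedDegree

section Shift

variable {C : Type*} [Field C]

theorem shiftX_injective : Function.Injective (shiftX C) := by
  have hcomp : (aeval ![X 0 - 1, X 1] : MvPolynomial (Fin 2) C →ₐ[C] _).comp (shiftX C) =
      AlgHom.id C _ := by
    ext i
    fin_cases i <;> simp [shiftX]
  have hinv : Function.LeftInverse (aeval ![X 0 - 1, X 1]) (shiftX C) :=
    fun f => DFunLike.congr_fun hcomp f
  exact hinv.injective

theorem degreeOf_shiftX_le (t : Fin 2) (f : MvPolynomial (Fin 2) C) :
    degreeOf t (shiftX C f) ≤ degreeOf t f := by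
  rw [shiftX, aeval_def, eval₂_eq']
  refine (degreeOf_sum_le _ _ _).trans (Finset.sup_le fun m hm => ?_)
  refine le_trans ?_ (monomial_le_degreeOf t hm)
  refine (degreeOf_C_mul_le _ _ _).trans ?_
  have hX : degreeOf t (X 0 + 1 : MvPolynomial (Fin 2) C) ≤ degreeOf t (X 0 : MvPolynomial _ C) :=
    (degreeOf_add_le _ _ _).trans (by simp [← C_1, -map_one])
  rw [Fin.prod_univ_two]
  refine (degreeOf_mul_le _ _ _).trans ((add_le_add (degreeOf_pow_le _ _ _)
    (degreeOf_pow_le _ _ _)).trans ?_)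
  refine (add_le_add_left (Nat.mul_le_mul_left (m 0) hX) _).trans ?_
  fin_cases t <;> simp [degreeOf_X]

theorem iterate_shiftX_mem_bidegreeLE {d h : ℕ} {f : MvPolynomial (Fin 2) C}
    (hf : f ∈ bidegreeLE C d h) (j : ℕ) : (shiftX C)^[j] f ∈ bidegreeLE C d h := by
  induction j with
  | zero => exact hf
  | succ j ih =>
    rw [Function.iterate_succ_apply']
    rw [mem_bidegreeLE] at ih ⊢
    exact ⟨(degreeOf_shiftX_le _ _).trans ih.1, (degreeOf_shiftX_le _ _).trans ih.2⟩

/-- The endomorphism `Σ_{i ≤ r} (c_i·) ∘ S_x^i` of `C[x,y]`. -/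
noncomputable def shiftOperator (r : ℕ) (c : ℕ → MvPolynomial (Fin 2) C) :
    Module.End C (MvPolynomial (Fin 2) C) :=
  ∑ i ∈ Finset.range (r + 1),
    (LinearMap.mulLeft C (c i)) ∘ₗ
      (((shiftX C).toLinearMap : Module.End C (MvPolynomial (Fin 2) C)) ^ i)

theorem shiftOperator_apply (r : ℕ) (c : ℕ → MvPolynomial (Fin 2) C)
    (f : MvPolynomial (Fin 2) C) :
    shiftOperator r c f = ∑ i ∈ Finset.range (r + 1), c i * (shiftX C)^[i] f := by
  simp [shiftOperator, Module.End.pow_apply]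

/-- Left multiplication of the operator with coefficients `a_0, …, a_s` by an operator of order
at most `q`, on the level of coefficient sequences. -/
noncomputable def coeffsMulRight (q s : ℕ) (a : ℕ → MvPolynomial (Fin 2) C) :
    (ℕ → MvPolynomial (Fin 2) C) →ₗ[C] (ℕ → MvPolynomial (Fin 2) C) where
  toFun m k := ∑ j ∈ Finset.range (q + 1), ∑ i ∈ Finset.range (s + 1),
    if j + i = k then m j * (shiftX C)^[j] (a i) else 0
  map_add' m m' := by
    funext k
    simp only [Pi.add_apply, ← Finset.sum_add_distrib]
    refine Finset.sum_congr rfl fun j _ => Finset.sum_congr rfl fun i _ => ?_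
    split_ifs <;> ring
  map_smul' t m := by
    funext k
    simp [Finset.smul_sum]

theorem coeffsMulRight_apply (q s : ℕ) (a m : ℕ → MvPolynomial (Fin 2) C) (k : ℕ) :
    coeffsMulRight q s a m k = ∑ j ∈ Finset.range (q + 1), ∑ i ∈ Finset.range (s + 1),
      if j + i = k then m j * (shiftX C)^[j] (a i) else 0 :=
  rfl

theorem shiftOperator_coeffsMulRight (q s : ℕ) (a m : ℕ → MvPolynomial (Fin 2) C) :
    shiftOperator (q + s) (coeffsMulRight q s a m) =
      shiftOperator q m ∘ₗ shiftOperator s a := by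
  refine LinearMap.ext fun f => ?_
  simp only [LinearMap.comp_apply, shiftOperator_apply, coeffsMulRight_apply, Finset.sum_mul]
  rw [Finset.sum_comm]
  refine Finset.sum_congr rfl fun j hj => ?_
  rw [Finset.sum_comm, ← AlgHom.coe_pow, map_sum, Finset.mul_sum]
  refine Finset.sum_congr rfl fun i hi => ?_
  have hji : j + i < q + s + 1 := by
    rw [Finset.mem_range] at hi hj
    lia
  simp only [ite_mul, zero_mul, Finset.sum_ite_eq, Finset.mem_range, hji, if_true, map_mul]
  rw [AlgHom.coe_pow, Function.iterate_add_apply, mul_assoc]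

theorem coeffsMulRight_mem_boundedCoeffs {q s d h d' h' : ℕ} {a m : ℕ → MvPolynomial (Fin 2) C}
    (ha : ∀ i ≤ s, a i ∈ bidegreeLE C d' h') (hm : m ∈ boundedCoeffs C q d h) :
    coeffsMulRight q s a m ∈ boundedCoeffs C (q + s) (d + d') (h + h') := by
  refine ⟨fun k => ?_, fun k hk => ?_⟩
  · rw [coeffsMulRight_apply]
    refine Submodule.sum_mem _ fun j _ => Submodule.sum_mem _ fun i hi => ?_
    split_ifs
    · exact mul_mem_bidegreeLE (hm.1 j)
        (iterate_shiftX_mem_bidegreeLE (ha i (Finset.mem_range_succ_iff.1 hi)) j)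
    · exact zero_mem _
  · rw [coeffsMulRight_apply]
    refine Finset.sum_eq_zero fun j hj => Finset.sum_eq_zero fun i hi => if_neg ?_
    rw [Finset.mem_range] at hi hj
    lia

theorem coeffsMulRight_ne_zero {q s d h : ℕ} {a m : ℕ → MvPolynomial (Fin 2) C}
    (ha : ∃ i ≤ s, a i ≠ 0) (hm : m ∈ boundedCoeffs C q d h) (hm0 : m ≠ 0) :
    coeffsMulRight q s a m ≠ 0 := by
  classical
  have hm0' : ∃ j, m j ≠ 0 := Function.ne_iff.1 hm0
  have ha' : ∃ i, a i ≠ 0 := ha.imp fun _ => And.right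
  obtain ⟨i₁, hi₁, hai₁⟩ := ha
  set j₀ := Nat.find hm0' with hj₀
  set i₀ := Nat.find ha' with hi₀
  have hj₀q : j₀ ≤ q := not_lt.1 fun hlt => Nat.find_spec hm0' (hm.2 _ hlt)
  have hi₀s : i₀ ≤ s := (Nat.find_min' ha' hai₁).trans hi₁
  have hcoeff : coeffsMulRight q s a m (j₀ + i₀) = m j₀ * (shiftX C)^[j₀] (a i₀) := by
    rw [coeffsMulRight_apply, Finset.sum_eq_single_of_mem j₀ (Finset.mem_range_succ_iff.2 hj₀q),
      Finset.sum_eq_single_of_mem i₀ (Finset.mem_range_succ_iff.2 hi₀s), if_pos rfl]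
    · exact fun i _ hi => if_neg (by lia)
    · intro j _ hj
      refine Finset.sum_eq_zero fun i _ => ?_
      split_ifs with hji
      · rcases lt_or_gt_of_ne hj with hlt | hlt
        · rw [not_not.1 (Nat.find_min hm0' hlt), zero_mul]
        · have hi : i < i₀ := by lia
          rw [not_not.1 (Nat.find_min ha' hi), ← AlgHom.coe_pow, map_zero, mul_zero]
      · rfl
  intro hzero
  rw [hzero, Pi.zero_apply] at hcoeff
  refine mul_ne_zero (Nat.find_spec hm0') ?_ hcoeff.symm
  rw [← AlgHom.coe_pow]
  refine (map_ne_zero_iff _ ?_).2 (Nat.find_spec ha')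
  rw [AlgHom.coe_pow]
  exact shiftX_injective.iterate j₀

theorem finrank_map_coeffsMulRight {q s d h : ℕ} {a : ℕ → MvPolynomial (Fin 2) C}
    (ha : ∃ i ≤ s, a i ≠ 0) :
    Module.finrank C ((boundedCoeffs C q d h).map (coeffsMulRight q s a)) =
      (q + 1) * ((d + 1) * (h + 1)) := by
  rw [← finrank_boundedCoeffs C, ← LinearMap.range_domRestrict]
  refine LinearMap.finrank_range_of_inj ?_
  rw [injective_iff_map_eq_zero]
  intro m hm
  by_contra hne
  exact coeffsMulRight_ne_zero ha m.2 (by simpa using hne) hm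

end Shift

/-- Order–degree–height surface for common left multiples of shift operators
with coefficients in `C[x,y]` (Theorem 1 of the paper, shift case).
If `(r,d,h)` satisfies the stated polynomial inequality, then the operators
`L_ℓ = Σ_i (a_{ℓ,i}·)∘S_x^i` (of order `r_ℓ`, degree `≤ d_ℓ`, height `≤ h_ℓ`) have a
nonzero common left multiple of order at most `r`, degree at most `d`, and height at
most `h`, with multipliers of the expected shape. -/
theorem common_left_multiple_order_degree_height_shift
    (C : Type*) [Field C] [CharZero C] (n : ℕ)
    (rr dd hh : Fin n → ℕ)
    (a : Fin n → ℕ → MvPolynomial (Fin 2) C)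
    (hnz : ∀ ℓ, ∃ i ≤ rr ℓ, a ℓ i ≠ 0)
    (hd : ∀ ℓ, ∀ i ≤ rr ℓ, degreeOf 0 (a ℓ i) ≤ dd ℓ)
    (hh' : ∀ ℓ, ∀ i ≤ rr ℓ, degreeOf 1 (a ℓ i) ≤ hh ℓ)
    (r d h : ℕ)
    (hr : ∀ ℓ, rr ℓ ≤ r) (hdle : ∀ ℓ, dd ℓ ≤ d) (hhle : ∀ ℓ, hh ℓ ≤ h)
    (hineq :
      ((r : ℤ) + 1) * ((d : ℤ) + 1) * ((h : ℤ) + 1)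
        - ((r : ℤ) + 1) * ((d : ℤ) + 1) * (∑ ℓ, (hh ℓ : ℤ))
        - ((r : ℤ) + 1) * ((h : ℤ) + 1) * (∑ ℓ, (dd ℓ : ℤ))
        - ((d : ℤ) + 1) * ((h : ℤ) + 1) * (∑ ℓ, (rr ℓ : ℤ))
        + ((r : ℤ) + 1) * (∑ ℓ, (dd ℓ : ℤ) * (hh ℓ : ℤ))
        + ((d : ℤ) + 1) * (∑ ℓ, (rr ℓ : ℤ) * (hh ℓ : ℤ))
        + ((h : ℤ) + 1) * (∑ ℓ, (rr ℓ : ℤ) * (dd ℓ : ℤ))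
        - (∑ ℓ, (rr ℓ : ℤ) * (dd ℓ : ℤ) * (hh ℓ : ℤ)) > 0) :
    ∃ (c : ℕ → MvPolynomial (Fin 2) C) (mm : Fin n → ℕ → MvPolynomial (Fin 2) C),
      (¬ ∀ i ≤ r, c i = 0) ∧
      (∀ i ≤ r, degreeOf 0 (c i) ≤ d ∧ degreeOf 1 (c i) ≤ h) ∧
      (∀ ℓ, ∀ j ≤ r - rr ℓ,
        degreeOf 0 (mm ℓ j) ≤ d - dd ℓ ∧ degreeOf 1 (mm ℓ j) ≤ h - hh ℓ) ∧
      (∀ ℓ,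
        (∑ i ∈ Finset.range (r + 1),
            (LinearMap.mulLeft C (c i)) ∘ₗ
              (((shiftX C).toLinearMap :
                  Module.End C (MvPolynomial (Fin 2) C)) ^ i)) =
        (∑ j ∈ Finset.range (r - rr ℓ + 1),
            (LinearMap.mulLeft C (mm ℓ j)) ∘ₗ
              (((shiftX C).toLinearMap :
                  Module.End C (MvPolynomial (Fin 2) C)) ^ j)) ∘ₗ
          (∑ i ∈ Finset.range (rr ℓ + 1),
            (LinearMap.mulLeft C (a ℓ i)) ∘ₗ
              (((shiftX C).toLinearMap :
                  Module.End C (MvPolynomial (Fin 2) C)) ^ i))) := by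
  have hmap (ℓ : Fin n) : (boundedCoeffs C (r - rr ℓ) (d - dd ℓ) (h - hh ℓ)).map
      (coeffsMulRight (r - rr ℓ) (rr ℓ) (a ℓ)) ≤ boundedCoeffs C r d h := by
    rintro _ ⟨m, hm, rfl⟩
    have hmem := coeffsMulRight_mem_boundedCoeffs
      (fun i hi => mem_bidegreeLE.2 ⟨hd ℓ i hi, hh' ℓ i hi⟩) hm
    rwa [Nat.sub_add_cancel (hr ℓ), Nat.sub_add_cancel (hdle ℓ),
      Nat.sub_add_cancel (hhle ℓ)] at hmem
  obtain ⟨c, hc, hc0, hcU⟩ := exists_ne_zero_forall_mem_of_sum_codim_lt _ _ hmap (by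
    simp only [finrank_map_coeffsMulRight (hnz _), finrank_boundedCoeffs]
    push_cast [Nat.cast_sub (hr _), Nat.cast_sub (hdle _), Nat.cast_sub (hhle _)]
    rw [← sub_pos]
    refine lt_of_lt_of_eq hineq ?_
    simp only [Finset.mul_sum]
    simp only [sub_eq_add_neg, ← Finset.sum_neg_distrib, add_assoc, ← Finset.sum_add_distrib]
    congr 1
    · ring
    · refine Finset.sum_congr rfl fun ℓ _ => ?_
      ring)
  choose mm hmm hmmc using hcU
  refine ⟨c, mm, fun hzero => hc0 (funext fun i => ?_), fun i _ => mem_bidegreeLE.1 (hc.1 i),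
    fun ℓ j _ => mem_bidegreeLE.1 ((hmm ℓ).1 j), fun ℓ => ?_⟩
  · rcases le_or_gt i r with hi | hi
    · exact hzero i hi
    · exact hc.2 i hi
  · have hprod := shiftOperator_coeffsMulRight (r - rr ℓ) (rr ℓ) (a ℓ) (mm ℓ)
    rwa [hmmc ℓ, Nat.sub_add_cancel (hr ℓ)] at hprod
end

section
/- Suppose the coefficients c_0, …, c_r ∈ C[x,y] satisfy deg_x c_i ≤ d and deg_y c_i ≤ h for all i, and let P = Σ_{i=0}^{r} c_i · α^i · S_x^i(p) · Π_{m=1}^{M} P_{i,m}. Let Y ∈ C[x,y,k] be a polynomial with deg_x Y ≤ d + θ_x + r·μ − ν, deg_y Y ≤ h + θ_y + r·ξ − η, and deg_k Y ≤ θ_k + r·μ − ν. Then the polynomial P − (Q·S_k(Y) − R·Y) satisfies deg_x(P − (Q·S_k(Y) − R·Y)) ≤ d + θ_x + r·μ, deg_y(P − (Q·S_k(Y) − R·Y)) ≤ h + θ_y + r·ξ, and deg_k(P − (Q·S_k(Y) − R·Y)) ≤ θ_k + r·μ; consequently it has at most (d + θ_x + r·μ + 1)(h + θ_y + r·ξ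 + 1)(θ_k + r·μ + 1) nonzero monomials in x, y, k. -/
open MvPolynomial

noncomputable section

/-- `C[x,y,k]`, realized as `MvPolynomial (Fin 3) C` with `x = X 0`, `y = X 1`, `k = X 2`. -/
abbrev P3 (C : Type*) [CommSemiring C] := MvPolynomial (Fin 3) C

/-- The embedding `C[y] → C[x,y,k]` sending the indeterminate to `y = X 1`. -/
def toY {C : Type*} [CommSemiring C] (q : Polynomial C) : P3 C :=
  Polynomial.aeval (X 1 : P3 C) q

/-- The rising factorial `q^{(n)} = q(q+1)⋯(q+n−1)`, with `q^{(0)} = 1`. -/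
def risingFactorial {C : Type*} [CommSemiring C] (q : P3 C) (n : ℕ) : P3 C :=
  ∏ j ∈ Finset.range n, (q + (j : P3 C))

/-- The shift `S_x` on `C[x,y,k]`: `x ↦ x+1`, `y ↦ y`, `k ↦ k`. -/
def SX3 (C : Type*) [CommSemiring C] : P3 C →ₐ[C] P3 C := aeval ![X 0 + 1, X 1, X 2]

/-- The shift `S_k` on `C[x,y,k]`: `x ↦ x`, `y ↦ y`, `k ↦ k+1`. -/
def SK3 (C : Type*) [CommSemiring C] : P3 C →ₐ[C] P3 C := aeval ![X 0, X 1, X 2 + 1]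

/-- The fixed data of a proper hypergeometric term
`H = p α^x β^k Π_m Γ(A_m)Γ(B_m)/(Γ(U_m)Γ(V_m))`, together with a fixed order `r`. -/
structure HyperData (C : Type*) [Field C] [CharZero C] where
  M : ℕ
  r : ℕ
  a : Fin M → ℕ
  a' : Fin M → ℕ
  b : Fin M → ℕ
  b' : Fin M → ℕ
  u : Fin M → ℕ
  u' : Fin M → ℕ
  v : Fin M → ℕ
  v' : Fin M → ℕ
  a'' : Fin M → Polynomial C
  b'' : Fin M → Polynomial C
  u'' : Fin M → Polynomial C
  v'' : Fin M → Polynomial C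
  p : P3 C
  hp : p ≠ 0
  α : Polynomial C
  β : Polynomial C
  hα : α ≠ 0
  hβ : β ≠ 0

namespace HyperData

variable {C : Type*} [Field C] [CharZero C] (H : HyperData C)

/-- `A_m = a_m x + a'_m k + a''_m`. -/
def A (m : Fin H.M) : P3 C := (H.a m : P3 C) * X 0 + (H.a' m : P3 C) * X 2 + toY (H.a'' m)

/-- `B_m = b_m x − b'_m k + b''_m`. -/
def B (m : Fin H.M) : P3 C := (H.b m : P3 C) * X 0 - (H.b' m : P3 C) * X 2 + toY (H.b'' m)

/-- `U_m = u_m x + u'_m k + u''_m`. -/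
def U (m : Fin H.M) : P3 C := (H.u m : P3 C) * X 0 + (H.u' m : P3 C) * X 2 + toY (H.u'' m)

/-- `V_m = v_m x − v'_m k + v''_m`. -/
def V (m : Fin H.M) : P3 C := (H.v m : P3 C) * X 0 - (H.v' m : P3 C) * X 2 + toY (H.v'' m)

/-- `P_{i,m} = A_m^{(i a_m)} B_m^{(i b_m)} (U_m+i u_m)^{((r−i)u_m)} (V_m+i v_m)^{((r−i)v_m)}`. -/
def Pim (i : ℕ) (m : Fin H.M) : P3 C :=
  risingFactorial (H.A m) (i * H.a m) * risingFactorial (H.B m) (i * H.b m) *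
    risingFactorial (H.U m + ((i * H.u m : ℕ) : P3 C)) ((H.r - i) * H.u m) *
    risingFactorial (H.V m + ((i * H.v m : ℕ) : P3 C)) ((H.r - i) * H.v m)

/-- `Q = β Π_m A_m^{(a'_m)} (V_m + r v_m − v'_m)^{(v'_m)}`. -/
def Q : P3 C :=
  toY H.β * ∏ m, risingFactorial (H.A m) (H.a' m) *
    risingFactorial (H.V m + ((H.r * H.v m : ℕ) : P3 C) - ((H.v' m : ℕ) : P3 C)) (H.v' m)

/-- `R = Π_m (U_m + r u_m − u'_m)^{(u'_m)} B_m^{(b'_m)}`. -/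
def R : P3 C :=
  ∏ m, risingFactorial (H.U m + ((H.r * H.u m : ℕ) : P3 C) - ((H.u' m : ℕ) : P3 C)) (H.u' m) *
    risingFactorial (H.B m) (H.b' m)

/-- `θ_x = deg_x p`. -/
def θx : ℕ := degreeOf 0 H.p

/-- `θ_y = deg_y p`. -/
def θy : ℕ := degreeOf 1 H.p

/-- `θ_k = deg_k p`. -/
def θk : ℕ := degreeOf 2 H.p

/-- `μ = max(Σ_m (a_m + b_m), Σ_m (u_m + v_m))`. -/
def μ : ℕ := max (∑ m, (H.a m + H.b m)) (∑ m, (H.u m + H.v m))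

/-- `ν = max(Σ_m (a'_m + v'_m), Σ_m (u'_m + b'_m))`. -/
def ν : ℕ := max (∑ m, (H.a' m + H.v' m)) (∑ m, (H.u' m + H.b' m))

/-- `ξ = max(deg_y α + Σ_m (a_m deg_y A_m + b_m deg_y B_m), Σ_m (u_m deg_y U_m + v_m deg_y V_m))`. -/
def ξ : ℕ :=
  max (H.α.natDegree + ∑ m, (H.a m * degreeOf 1 (H.A m) + H.b m * degreeOf 1 (H.B m)))
    (∑ m, (H.u m * degreeOf 1 (H.U m) + H.v m * degreeOf 1 (H.V m)))

/-- `η = max(deg_y β + Σ_m (a'_m deg_y A_m + v'_m deg_y V_m), Σ_m (u'_m deg_y U_m + b'_m deg_y B_m))`. -/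
def η : ℕ :=
  max (H.β.natDegree + ∑ m, (H.a' m * degreeOf 1 (H.A m) + H.v' m * degreeOf 1 (H.V m)))
    (∑ m, (H.u' m * degreeOf 1 (H.U m) + H.b' m * degreeOf 1 (H.B m)))

/-- `P = Σ_{i=0}^{r} c_i α^i S_x^i(p) Π_m P_{i,m}`. -/
def P (c : ℕ → P3 C) : P3 C :=
  ∑ i ∈ Finset.range (H.r + 1), c i * toY H.α ^ i * (⇑(SX3 C))^[i] H.p * ∏ m, H.Pim i m

end HyperData

end

namespace MvPolynomial

/-- A substitution sending `X j` to degree at most one in `X j`, and every other variable to a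
polynomial not involving `X j`, does not raise the degree in `X j`. -/
theorem degreeOf_aeval_le {R σ : Type*} [CommSemiring R] (j : σ)
    (f : σ → MvPolynomial σ R) (hj : degreeOf j (f j) ≤ 1)
    (hf : ∀ i, i ≠ j → degreeOf j (f i) = 0) (q : MvPolynomial σ R) :
    degreeOf j (aeval f q) ≤ degreeOf j q := by
  rw [aeval_def, eval₂_eq]
  refine (degreeOf_sum_le _ _ _).trans (Finset.sup_le fun s hs => ?_)
  refine (degreeOf_C_mul_le _ _ _).trans ((degreeOf_prod_le _ _ _).trans ?_)
  refine le_trans ?_ (monomial_le_degreeOf j hs)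
  have hpow : ∀ i, degreeOf j (f i ^ s i) ≤ s i * degreeOf j (f i) := fun i => degreeOf_pow_le _ _ _
  by_cases hmem : j ∈ s.support
  · rw [Finset.sum_eq_single_of_mem j hmem fun i _ hi => by simpa [hf i hi] using hpow i]
    exact (hpow j).trans (by simpa using Nat.mul_le_mul_left (s j) hj)
  · rw [Finset.sum_eq_zero]
    · exact Nat.zero_le _
    · intro i hi
      have hij : i ≠ j := fun h => hmem (h ▸ hi)
      simpa [hf i hij] using hpow i

@[simp]
theorem degreeOf_natCast {R σ : Type*} [CommSemiring R] (j : σ) (n : ℕ) :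
    degreeOf j (n : MvPolynomial σ R) = 0 := by
  rw [← map_natCast (C : R →+* MvPolynomial σ R), degreeOf_C]

theorem degreeOf_add_natCast_le {R σ : Type*} [CommSemiring R] (j : σ)
    (q : MvPolynomial σ R) (n : ℕ) : degreeOf j (q + (n : MvPolynomial σ R)) ≤ degreeOf j q :=
  (degreeOf_add_le _ _ _).trans (by simp)

theorem degreeOf_sub_natCast_le {R σ : Type*} [CommRing R] (j : σ)
    (q : MvPolynomial σ R) (n : ℕ) : degreeOf j (q - (n : MvPolynomial σ R)) ≤ degreeOf j q :=
  (degreeOf_sub_le _ _ _).trans (by simp)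

theorem degreeOf_natCast_mul_X_le {R σ : Type*} [CommSemiring R] [Nontrivial R] (i j : σ) (n : ℕ) :
    degreeOf j ((n : MvPolynomial σ R) * X i) ≤ 1 := by
  classical
  refine (degreeOf_mul_le _ _ _).trans ?_
  rw [degreeOf_natCast, degreeOf_X]
  split_ifs <;> simp

/-- A polynomial in three variables has at most as many monomials as the box cut out by its
degrees in the individual variables has lattice points. -/
theorem card_support_le_of_degreeOf_le {R : Type*} [CommSemiring R]
    (q : MvPolynomial (Fin 3) R) {d₀ d₁ d₂ : ℕ} (h₀ : degreeOf 0 q ≤ d₀)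
    (h₁ : degreeOf 1 q ≤ d₁) (h₂ : degreeOf 2 q ≤ d₂) :
    q.support.card ≤ (d₀ + 1) * (d₁ + 1) * (d₂ + 1) := by
  have key := Finset.card_le_card_of_injOn (s := q.support)
    (t := (Finset.range (d₀ + 1) ×ˢ Finset.range (d₁ + 1)) ×ˢ Finset.range (d₂ + 1))
    (fun s => ((s 0, s 1), s 2))
    (fun s hs => by
      have hs' : s ∈ q.support := hs
      have e₀ := monomial_le_degreeOf 0 hs'
      have e₁ := monomial_le_degreeOf 1 hs'
      have e₂ := monomial_le_degreeOf 2 hs'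
      simp only [Finset.coe_product, Set.mem_prod, Finset.mem_coe, Finset.mem_range]
      omega)
    (fun s _ t _ hst => by
      simp only [Prod.mk.injEq] at hst
      ext i
      fin_cases i
      · exact hst.1.1
      · exact hst.1.2
      · exact hst.2)
  simpa using key

end MvPolynomial

section Degrees

variable {C : Type*} [CommSemiring C]

theorem degreeOf_toY_le (j : Fin 3) (q : Polynomial C) :
    degreeOf j (toY q) ≤ q.natDegree * degreeOf j (X 1 : P3 C) := by
  rw [toY, Polynomial.aeval_eq_sum_range]
  refine (degreeOf_sum_le _ _ _).trans (Finset.sup_le fun i hi => ?_)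
  rw [smul_eq_C_mul]
  refine (degreeOf_C_mul_le _ _ _).trans ((degreeOf_pow_le _ _ _).trans ?_)
  exact Nat.mul_le_mul_right _ (Nat.lt_succ_iff.mp (Finset.mem_range.mp hi))

theorem degreeOf_toY_of_ne {j : Fin 3} (hj : j ≠ 1) (q : Polynomial C) :
    degreeOf j (toY q) = 0 := by
  simpa [degreeOf_X_of_ne hj] using degreeOf_toY_le j q

theorem degreeOf_one_toY_le [Nontrivial C] (q : Polynomial C) :
    degreeOf 1 (toY q) ≤ q.natDegree := by
  simpa using degreeOf_toY_le 1 q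

theorem degreeOf_risingFactorial_le (j : Fin 3) (q : P3 C) (n : ℕ) :
    degreeOf j (risingFactorial q n) ≤ n * degreeOf j q := by
  refine (degreeOf_prod_le _ _ _).trans
    ((Finset.sum_le_sum fun i _ => degreeOf_add_natCast_le j q i).trans ?_)
  simp

theorem degreeOf_X_add_one_le [Nontrivial C] (i j : Fin 3) :
    degreeOf j (X i + 1 : P3 C) ≤ degreeOf j (X i : P3 C) := by
  simpa using degreeOf_add_natCast_le j (X i : P3 C) 1

theorem degreeOf_SX3_le [Nontrivial C] (j : Fin 3) (q : P3 C) :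
    degreeOf j (SX3 C q) ≤ degreeOf j q := by
  have h := degreeOf_X_add_one_le (C := C) 0 j
  refine degreeOf_aeval_le j _ ?_ (fun i hi => ?_) q <;>
    fin_cases j <;> try fin_cases i
  all_goals simp_all [degreeOf_X]

theorem degreeOf_SK3_le [Nontrivial C] (j : Fin 3) (q : P3 C) :
    degreeOf j (SK3 C q) ≤ degreeOf j q := by
  have h := degreeOf_X_add_one_le (C := C) 2 j
  refine degreeOf_aeval_le j _ ?_ (fun i hi => ?_) q <;>
    fin_cases j <;> try fin_cases i
  all_goals simp_all [degreeOf_X]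

theorem degreeOf_SX3_iterate_le [Nontrivial C] (j : Fin 3) (i : ℕ) (q : P3 C) :
    degreeOf j ((⇑(SX3 C))^[i] q) ≤ degreeOf j q := by
  induction i generalizing q with
  | zero => exact le_rfl
  | succ i ih => exact (ih _).trans (degreeOf_SX3_le j q)

end Degrees

namespace HyperData

variable {C : Type*} [Field C] [CharZero C] (H : HyperData C)

theorem degreeOf_A_le_one {j : Fin 3} (hj : j ≠ 1) (m : Fin H.M) : degreeOf j (H.A m) ≤ 1 := by
  refine (degreeOf_add_le _ _ _).trans (max_le ((degreeOf_add_le _ _ _).trans ?_) ?_)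
  · exact max_le (degreeOf_natCast_mul_X_le _ _ _) (degreeOf_natCast_mul_X_le _ _ _)
  · simp [degreeOf_toY_of_ne hj]

theorem degreeOf_B_le_one {j : Fin 3} (hj : j ≠ 1) (m : Fin H.M) : degreeOf j (H.B m) ≤ 1 := by
  refine (degreeOf_add_le _ _ _).trans (max_le ((degreeOf_sub_le _ _ _).trans ?_) ?_)
  · exact max_le (degreeOf_natCast_mul_X_le _ _ _) (degreeOf_natCast_mul_X_le _ _ _)
  · simp [degreeOf_toY_of_ne hj]

theorem degreeOf_U_le_one {j : Fin 3} (hj : j ≠ 1) (m : Fin H.M) : degreeOf j (H.U m) ≤ 1 := by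
  refine (degreeOf_add_le _ _ _).trans (max_le ((degreeOf_add_le _ _ _).trans ?_) ?_)
  · exact max_le (degreeOf_natCast_mul_X_le _ _ _) (degreeOf_natCast_mul_X_le _ _ _)
  · simp [degreeOf_toY_of_ne hj]

theorem degreeOf_V_le_one {j : Fin 3} (hj : j ≠ 1) (m : Fin H.M) : degreeOf j (H.V m) ≤ 1 := by
  refine (degreeOf_add_le _ _ _).trans (max_le ((degreeOf_sub_le _ _ _).trans ?_) ?_)
  · exact max_le (degreeOf_natCast_mul_X_le _ _ _) (degreeOf_natCast_mul_X_le _ _ _)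
  · simp [degreeOf_toY_of_ne hj]

theorem degreeOf_Pim_le (j : Fin 3) (i : ℕ) (m : Fin H.M) :
    degreeOf j (H.Pim i m) ≤
      i * (H.a m * degreeOf j (H.A m) + H.b m * degreeOf j (H.B m)) +
        (H.r - i) * (H.u m * degreeOf j (H.U m) + H.v m * degreeOf j (H.V m)) := by
  have hA := degreeOf_risingFactorial_le j (H.A m) (i * H.a m)
  have hB := degreeOf_risingFactorial_le j (H.B m) (i * H.b m)
  have hU := (degreeOf_risingFactorial_le j (H.U m + ((i * H.u m : ℕ) : P3 C))
    ((H.r - i) * H.u m)).trans (Nat.mul_le_mul_left _ (degreeOf_add_natCast_le j _ _))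
  have hV := (degreeOf_risingFactorial_le j (H.V m + ((i * H.v m : ℕ) : P3 C))
    ((H.r - i) * H.v m)).trans (Nat.mul_le_mul_left _ (degreeOf_add_natCast_le j _ _))
  refine (degreeOf_mul_le _ _ _).trans ((Nat.add_le_add ((degreeOf_mul_le _ _ _).trans
    (Nat.add_le_add ((degreeOf_mul_le _ _ _).trans (Nat.add_le_add hA hB)) hU)) hV).trans
    (le_of_eq ?_))
  ring

theorem degreeOf_Q_le (j : Fin 3) :
    degreeOf j H.Q ≤ degreeOf j (toY H.β) +
      ∑ m, (H.a' m * degreeOf j (H.A m) + H.v' m * degreeOf j (H.V m)) := by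
  refine (degreeOf_mul_le _ _ _).trans (Nat.add_le_add_left ((degreeOf_prod_le _ _ _).trans
    (Finset.sum_le_sum fun m _ => (degreeOf_mul_le _ _ _).trans
      (Nat.add_le_add (degreeOf_risingFactorial_le _ _ _)
        ((degreeOf_risingFactorial_le _ _ _).trans (Nat.mul_le_mul_left _ ?_))))) _)
  exact (degreeOf_sub_natCast_le _ _ _).trans (degreeOf_add_natCast_le _ _ _)

theorem degreeOf_R_le (j : Fin 3) :
    degreeOf j H.R ≤
      ∑ m, (H.u' m * degreeOf j (H.U m) + H.b' m * degreeOf j (H.B m)) := by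
  refine (degreeOf_prod_le _ _ _).trans
    (Finset.sum_le_sum fun m _ => (degreeOf_mul_le _ _ _).trans
      (Nat.add_le_add ((degreeOf_risingFactorial_le _ _ _).trans (Nat.mul_le_mul_left _ ?_))
        (degreeOf_risingFactorial_le _ _ _)))
  exact (degreeOf_sub_natCast_le _ _ _).trans (degreeOf_add_natCast_le _ _ _)

theorem degreeOf_P_le (j : Fin 3) (c : ℕ → P3 C) {e N : ℕ}
    (hc : ∀ i ≤ H.r, degreeOf j (c i) ≤ e)
    (hAB : degreeOf j (toY H.α) +
      ∑ m, (H.a m * degreeOf j (H.A m) + H.b m * degreeOf j (H.B m)) ≤ N)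
    (hUV : ∑ m, (H.u m * degreeOf j (H.U m) + H.v m * degreeOf j (H.V m)) ≤ N) :
    degreeOf j (H.P c) ≤ e + degreeOf j H.p + H.r * N := by
  refine (degreeOf_sum_le _ _ _).trans (Finset.sup_le fun i hi => ?_)
  have hir : i ≤ H.r := Nat.lt_succ_iff.mp (Finset.mem_range.mp hi)
  have hα := degreeOf_pow_le j (toY H.α) i
  have hprod := (degreeOf_prod_le j Finset.univ (H.Pim i)).trans
    (Finset.sum_le_sum fun m _ => H.degreeOf_Pim_le j i m)
  rw [Finset.sum_add_distrib, ← Finset.mul_sum, ← Finset.mul_sum] at hprod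
  have h₁ := Nat.mul_le_mul_left i hAB
  have h₂ := Nat.mul_le_mul_left (H.r - i) hUV
  have hN : i * N + (H.r - i) * N = H.r * N := by rw [← add_mul, Nat.add_sub_cancel' hir]
  rw [mul_add] at h₁
  have hp := degreeOf_SX3_iterate_le j i H.p
  have e₁ := degreeOf_mul_le j (c i * toY H.α ^ i * (⇑(SX3 C))^[i] H.p) (∏ m, H.Pim i m)
  have e₂ := degreeOf_mul_le j (c i * toY H.α ^ i) ((⇑(SX3 C))^[i] H.p)
  have e₃ := degreeOf_mul_le j (c i) (toY H.α ^ i)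
  have e₄ := hc i hir
  omega

/-- Degree bound in a single variable, for arbitrary bounds `N` and `K` on the growth of `P`, resp.
of `Q` and `R`. -/
theorem degreeOf_P_sub_le (j : Fin 3) (c : ℕ → P3 C) (Y : P3 C) {e N K : ℕ}
    (hc : ∀ i ≤ H.r, degreeOf j (c i) ≤ e)
    (hAB : degreeOf j (toY H.α) +
      ∑ m, (H.a m * degreeOf j (H.A m) + H.b m * degreeOf j (H.B m)) ≤ N)
    (hUV : ∑ m, (H.u m * degreeOf j (H.U m) + H.v m * degreeOf j (H.V m)) ≤ N)
    (hAV : degreeOf j (toY H.β) +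
      ∑ m, (H.a' m * degreeOf j (H.A m) + H.v' m * degreeOf j (H.V m)) ≤ K)
    (hUB : ∑ m, (H.u' m * degreeOf j (H.U m) + H.b' m * degreeOf j (H.B m)) ≤ K)
    (hY : degreeOf j Y + K ≤ e + degreeOf j H.p + H.r * N) :
    degreeOf j (H.P c - (H.Q * SK3 C Y - H.R * Y)) ≤ e + degreeOf j H.p + H.r * N := by
  refine (degreeOf_sub_le _ _ _).trans (max_le (H.degreeOf_P_le j c hc hAB hUV)
    ((degreeOf_sub_le _ _ _).trans (max_le ?_ ?_)))
  · have := degreeOf_mul_le j H.Q (SK3 C Y)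
    have := degreeOf_SK3_le j Y
    have := H.degreeOf_Q_le j
    omega
  · have := degreeOf_mul_le j H.R Y
    have := H.degreeOf_R_le j
    omega

/-- Degree bound in a variable other than `y`. -/
theorem degreeOf_P_sub_le_of_ne {j : Fin 3} (hj : j ≠ 1) (c : ℕ → P3 C) (Y : P3 C) {e : ℕ}
    (hc : ∀ i ≤ H.r, degreeOf j (c i) ≤ e)
    (hY : degreeOf j Y + H.ν ≤ e + degreeOf j H.p + H.r * H.μ) :
    degreeOf j (H.P c - (H.Q * SK3 C Y - H.R * Y)) ≤ e + degreeOf j H.p + H.r * H.μ := by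
  have key : ∀ (s t : Fin H.M → ℕ) (F G : Fin H.M → P3 C), (∀ m, degreeOf j (F m) ≤ 1) →
      (∀ m, degreeOf j (G m) ≤ 1) →
      ∑ m, (s m * degreeOf j (F m) + t m * degreeOf j (G m)) ≤ ∑ m, (s m + t m) :=
    fun s t F G hF hG => Finset.sum_le_sum fun m _ =>
      Nat.add_le_add (mul_le_of_le_one_right (Nat.zero_le _) (hF m)) (mul_le_of_le_one_right (Nat.zero_le _) (hG m))
  refine H.degreeOf_P_sub_le j c Y hc ?_ ?_ ?_ ?_ hY
  · rw [degreeOf_toY_of_ne hj, zero_add]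
    exact (key _ _ _ _ (H.degreeOf_A_le_one hj) (H.degreeOf_B_le_one hj)).trans (le_max_left _ _)
  · exact (key _ _ _ _ (H.degreeOf_U_le_one hj) (H.degreeOf_V_le_one hj)).trans (le_max_right _ _)
  · rw [degreeOf_toY_of_ne hj, zero_add]
    exact (key _ _ _ _ (H.degreeOf_A_le_one hj) (H.degreeOf_V_le_one hj)).trans (le_max_left _ _)
  · exact (key _ _ _ _ (H.degreeOf_U_le_one hj) (H.degreeOf_B_le_one hj)).trans (le_max_right _ _)

end HyperData

open HyperData in
/-- Lemma 2 (degree bounds for `P − (Q·S_k(Y) − R·Y)`): if the coefficients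
`c_0, …, c_r ∈ C[x,y]` have `x`-degree `≤ d` and `y`-degree `≤ h`, and
`Y ∈ C[x,y,k]` satisfies `deg_x Y ≤ d + θ_x + rμ − ν`, `deg_y Y ≤ h + θ_y + rξ − η`,
`deg_k Y ≤ θ_k + rμ − ν`, then `P − (Q·S_k(Y) − R·Y)` has `x`-degree `≤ d + θ_x + rμ`,
`y`-degree `≤ h + θ_y + rξ`, `k`-degree `≤ θ_k + rμ`, and consequently at most
`(d + θ_x + rμ + 1)(h + θ_y + rξ + 1)(θ_k + rμ + 1)` nonzero monomials. -/
theorem degree_bounds_for_P_minus_QSkY_plus_RY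
    (C : Type*) [Field C] [CharZero C] (H : HyperData C) (d h : ℕ)
    (c : ℕ → P3 C)
    (hck : ∀ i ≤ H.r, degreeOf 2 (c i) = 0)
    (hcd : ∀ i ≤ H.r, degreeOf 0 (c i) ≤ d)
    (hch : ∀ i ≤ H.r, degreeOf 1 (c i) ≤ h)
    (Y : P3 C)
    (hYx : (degreeOf 0 Y : ℤ) ≤ (d : ℤ) + H.θx + H.r * H.μ - H.ν)
    (hYy : (degreeOf 1 Y : ℤ) ≤ (h : ℤ) + H.θy + H.r * H.ξ - H.η)
    (hYk : (degreeOf 2 Y : ℤ) ≤ (H.θk : ℤ) + H.r * H.μ - H.ν) :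
    degreeOf 0 (H.P c - (H.Q * SK3 C Y - H.R * Y)) ≤ d + H.θx + H.r * H.μ ∧
    degreeOf 1 (H.P c - (H.Q * SK3 C Y - H.R * Y)) ≤ h + H.θy + H.r * H.ξ ∧
    degreeOf 2 (H.P c - (H.Q * SK3 C Y - H.R * Y)) ≤ H.θk + H.r * H.μ ∧
    (H.P c - (H.Q * SK3 C Y - H.R * Y)).support.card ≤
      (d + H.θx + H.r * H.μ + 1) * (h + H.θy + H.r * H.ξ + 1) * (H.θk + H.r * H.μ + 1) := by
  have hx : degreeOf 0 (H.P c - (H.Q * SK3 C Y - H.R * Y)) ≤ d + H.θx + H.r * H.μ :=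
    H.degreeOf_P_sub_le_of_ne (by decide) c Y hcd (by zify; exact le_sub_iff_add_le.mp hYx)
  have hy : degreeOf 1 (H.P c - (H.Q * SK3 C Y - H.R * Y)) ≤ h + H.θy + H.r * H.ξ :=
    H.degreeOf_P_sub_le 1 c Y hch
      ((Nat.add_le_add_right (degreeOf_one_toY_le H.α) _).trans (le_max_left _ _))
      (le_max_right _ _)
      ((Nat.add_le_add_right (degreeOf_one_toY_le H.β) _).trans (le_max_left _ _))
      (le_max_right _ _) (K := H.η) (by zify; exact le_sub_iff_add_le.mp hYy)
  have hk : degreeOf 2 (H.P c - (H.Q * SK3 C Y - H.R * Y)) ≤ H.θk + H.r * H.μ := by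
    have := H.degreeOf_P_sub_le_of_ne (j := 2) (e := 0) (by decide) c Y (fun i hi => (hck i hi).le)
      (by rw [zero_add]; zify; exact le_sub_iff_add_le.mp hYk)
    rwa [zero_add] at this
  exact ⟨hx, hy, hk, card_support_le_of_degreeOf_le _ hx hy hk⟩
end
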